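/- Let s ∈ ℂ_p with s ≠ 0 and s² = (c-1)² + 4ab, and set α = (1+c+s)/2, β = (1+c-s)/2, x₁ = (1-c+s)/(2b), x₂ = (1-c-s)/(2b) (so x₁, x₂ are the two distinct fixed points of f). Suppose |α|_p ≠ |β|_p. Then for every x ∈ ℂ_p \ ({x₁, x₂} ∪ 𝒫_p): lim_{n→∞} f^n(x) = x₂ if |α|_p < |β|_p, and lim_{n→∞} f^n(x) = x₁ if |α|_p > |β|_p. -/

import Mathlib

/-!
Write `T x = (a x + b) / (c x + d)`. If `u` is a fixed point of `T`, then `(1, -u)` is a left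
eigenvector of the matrix of `T`, with eigenvalue `a - c u`; hence the denominator `c x + d` carries
`T x - u` to `(a - c u) (x - u)`. For a second fixed point `v` the denominators cancel in the
quotient, so the coordinate `w = (x - u) / (x - v)` linearizes `T` to multiplication by
`(a - c u) / (a - c v)`. If this ratio has norm less than one, then `w` tends to `0` along every
orbit that avoids the pole, which means that the orbit tends to `u`.
-/

open Filter Topology

theorem tendsto_of_tendsto_sub_div_sub {ι K : Type*} [Field K] [TopologicalSpace K]
    [IsTopologicalDivisionRing K] [T2Space K] {l : Filter ι} {y : ι → K} {u v : K}
    (hv : ∀ᶠ i in l, y i ≠ v) (hw : Tendsto (fun i => (y i - u) / (y i - v)) l (𝓝 0)) :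
    Tendsto y l (𝓝 u) := by
  have hlim : Tendsto (fun i => (u - (y i - u) / (y i - v) * v) / (1 - (y i - u) / (y i - v)))
      l (𝓝 u) := by
    simpa [Pi.div_def] using (tendsto_const_nhds.sub (hw.mul_const v)).div
      (tendsto_const_nhds.sub hw) (by simp : (1 : K) - 0 ≠ 0)
  refine hlim.congr' ?_
  filter_upwards [hv, hw.eventually_ne zero_ne_one] with i hi hi1
  rw [div_eq_iff (sub_ne_zero.mpr hi1.symm)]
  linear_combination div_mul_cancel₀ (y i - u) (sub_ne_zero.mpr hi)

/-- The linear fractional map `x ↦ (a x + b) / (c x + d)` on the affine line. It takes the junk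
value `0` at the pole, and `a d - b c` is allowed to vanish. The lemmas on its dynamics therefore
encode a fixed point `u` by the division-free equation `u (c u + d) = a u + b`, and an orbit that
avoids the pole by denominators that never vanish. -/
def linearFractional {K : Type*} [Field K] (a b c d x : K) : K :=
  (a * x + b) / (c * x + d)

namespace linearFractional

section Field

variable {K : Type*} [Field K] {a b c d u v x : K}

theorem fixedPoint_equation_iff [NeZero (2 : K)] {s : K} (hc : c ≠ 0)
    (hs : s ^ 2 = (d - a) ^ 2 + 4 * b * c) :
    u * (c * u + d) = a * u + b ↔ u = (a - d + s) / (2 * c) ∨ u = (a - d - s) / (2 * c) := by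
  have hdiscrim : discrim c (d - a) (-b) = s * s := by
    rw [discrim]
    linear_combination -hs
  rw [← neg_sub d a, ← quadratic_eq_zero_iff hc hdiscrim]
  constructor <;> intro h <;> linear_combination h

theorem sub_mul_eq (hu : u * (c * u + d) = a * u + b) (hx : c * x + d ≠ 0) :
    (linearFractional a b c d x - u) * (c * x + d) = (a - c * u) * (x - u) := by
  rw [linearFractional, sub_mul, div_mul_cancel₀ _ hx]
  linear_combination -hu

theorem sub_div_sub (hu : u * (c * u + d) = a * u + b) (hv : v * (c * v + d) = a * v + b)
    (hx : c * x + d ≠ 0) :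
    (linearFractional a b c d x - u) / (linearFractional a b c d x - v) =
      (a - c * u) / (a - c * v) * ((x - u) / (x - v)) := by
  rw [← mul_div_mul_right _ _ hx, sub_mul_eq hu hx, sub_mul_eq hv hx, mul_div_mul_comm]

theorem iterate_sub_div_sub (hu : u * (c * u + d) = a * u + b)
    (hv : v * (c * v + d) = a * v + b)
    (hx : ∀ n, c * (linearFractional a b c d)^[n] x + d ≠ 0) (n : ℕ) :
    ((linearFractional a b c d)^[n] x - u) / ((linearFractional a b c d)^[n] x - v) =
      ((a - c * u) / (a - c * v)) ^ n * ((x - u) / (x - v)) := by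
  induction n with
  | zero => simp
  | succ n ih =>
    rw [Function.iterate_succ_apply', sub_div_sub hu hv (hx n), ih, pow_succ', mul_assoc]

theorem iterate_ne (hv : v * (c * v + d) = a * v + b) (hav : a - c * v ≠ 0)
    (hx : ∀ n, c * (linearFractional a b c d)^[n] x + d ≠ 0) (hxv : x ≠ v) (n : ℕ) :
    (linearFractional a b c d)^[n] x ≠ v := by
  induction n with
  | zero => exact hxv
  | succ n ih =>
    rw [Function.iterate_succ_apply', ← sub_ne_zero]
    refine left_ne_zero_of_mul (b := c * (linearFractional a b c d)^[n] x + d) ?_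
    rw [sub_mul_eq hv (hx n)]
    exact mul_ne_zero hav (sub_ne_zero.mpr ih)

end Field

theorem tendsto_iterate {K : Type*} [NormedField K] {a b c d u v x : K}
    (hu : u * (c * u + d) = a * u + b) (hv : v * (c * v + d) = a * v + b)
    (hlt : ‖a - c * u‖ < ‖a - c * v‖)
    (hx : ∀ n, c * (linearFractional a b c d)^[n] x + d ≠ 0) (hxv : x ≠ v) :
    Tendsto (fun n => (linearFractional a b c d)^[n] x) atTop (𝓝 u) := by
  have hpos : 0 < ‖a - c * v‖ := (norm_nonneg _).trans_lt hlt
  have hratio : ‖(a - c * u) / (a - c * v)‖ < 1 := by rwa [norm_div, div_lt_one hpos]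
  refine tendsto_of_tendsto_sub_div_sub
    (.of_forall (iterate_ne hv (norm_pos_iff.mp hpos) hx hxv)) ?_
  simp only [iterate_sub_div_sub hu hv hx]
  simpa only [zero_mul] using (tendsto_pow_atTop_nhds_zero_of_norm_lt_one hratio).mul_const _

end linearFractional

theorem stmt19_general {K : Type*} [NormedField K] [NeZero (2 : K)] {a b c : K} (hb : b ≠ 0)
    {f : K → K} (hf : ∀ x, f x = (x + a) / (b * x + c))
    {P : Set K} (hP : P = {x : K | ∃ n : ℕ, f^[n] x = -c / b})
    {s : K} (hs : s ^ 2 = (c - 1) ^ 2 + 4 * a * b)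
    {α β x₁ x₂ : K} (hα : α = (1 + c + s) / 2) (hβ : β = (1 + c - s) / 2)
    (hx₁ : x₁ = (1 - c + s) / (2 * b)) (hx₂ : x₂ = (1 - c - s) / (2 * b))
    {x : K} (hx : x ∉ P) :
    (‖α‖ < ‖β‖ → x ≠ x₁ → Tendsto (fun n : ℕ => f^[n] x) atTop (𝓝 x₂)) ∧
      (‖β‖ < ‖α‖ → x ≠ x₂ → Tendsto (fun n : ℕ => f^[n] x) atTop (𝓝 x₁)) := by
  obtain rfl : f = linearFractional 1 a b c := by
    funext z
    rw [hf, linearFractional, one_mul]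
  have hpole (n : ℕ) : b * (linearFractional 1 a b c)^[n] x + c ≠ 0 := fun h =>
    hx (hP ▸ ⟨n, by rw [eq_div_iff hb]; linear_combination h⟩)
  have hfix₁ := (linearFractional.fixedPoint_equation_iff hb hs).mpr (.inl hx₁)
  have hfix₂ := (linearFractional.fixedPoint_equation_iff hb hs).mpr (.inr hx₂)
  obtain rfl : β = 1 - b * x₁ := by rw [hβ, hx₁]; field_simp; ring
  obtain rfl : α = 1 - b * x₂ := by rw [hα, hx₂]; field_simp; ring
  exact ⟨fun hlt hne => linearFractional.tendsto_iterate hfix₂ hfix₁ hlt hpole hne,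
    fun hlt hne => linearFractional.tendsto_iterate hfix₁ hfix₂ hlt hpole hne⟩

/-- `ℂ_p` is modelled as a complete, algebraically closed,
nontrivially normed ultrametric field `K` which is a normed `ℚ_[p]`-algebra; its norm
`‖·‖` plays the role of `|·|_p`. Fix `a b c ∈ K` with `b ≠ 0`, `c ≠ a*b`, let
`f x = (x+a)/(b*x+c)` (defined for `x ≠ x̂ = -c/b`) and
`𝒫_p = {x | ∃ n, f^[n] x = x̂}`. Let `s ≠ 0` with `s² = (c-1)² + 4ab`, and set
`α = (1+c+s)/2`, `β = (1+c-s)/2`, `x₁ = (1-c+s)/(2b)`, `x₂ = (1-c-s)/(2b)` (so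
`x₁, x₂` are the two distinct fixed points of `f`). Suppose `‖α‖ ≠ ‖β‖`. Then for
every `x ∈ K \ ({x₁, x₂} ∪ 𝒫_p)`: `f^[n] x → x₂` if `‖α‖ < ‖β‖`, and `f^[n] x → x₁`
if `‖α‖ > ‖β‖`. -/
theorem stmt19 (p : ℕ) [Fact p.Prime] (K : Type*) [NontriviallyNormedField K]
    [IsUltrametricDist K] [IsAlgClosed K] [CompleteSpace K] [NormedAlgebra ℚ_[p] K]
    (a b c : K) (hb : b ≠ 0) (hc : c ≠ a * b)
    (f : K → K) (hf : ∀ x, f x = (x + a) / (b * x + c))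
    (P : Set K) (hP : P = {x : K | ∃ n : ℕ, f^[n] x = -c / b})
    (s : K) (hs0 : s ≠ 0) (hs : s ^ 2 = (c - 1) ^ 2 + 4 * a * b)
    (α β x₁ x₂ : K)
    (hα : α = (1 + c + s) / 2) (hβ : β = (1 + c - s) / 2)
    (hx₁ : x₁ = (1 - c + s) / (2 * b)) (hx₂ : x₂ = (1 - c - s) / (2 * b))
    (hαβ : ‖α‖ ≠ ‖β‖) :
    ∀ x : K, x ∉ ({x₁, x₂} : Set K) ∪ P →
      (‖α‖ < ‖β‖ → Filter.Tendsto (fun n : ℕ => f^[n] x) Filter.atTop (nhds x₂)) ∧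
      (‖β‖ < ‖α‖ → Filter.Tendsto (fun n : ℕ => f^[n] x) Filter.atTop (nhds x₁)) := by
  have : CharZero K := charZero_of_injective_algebraMap (algebraMap ℚ_[p] K).injective
  intro x hx
  simp only [Set.mem_union, Set.mem_insert_iff, Set.mem_singleton_iff, not_or] at hx
  exact (stmt19_general hb hf hP hs hα hβ hx₁ hx₂ hx.2).imp
    (fun h hlt => h hlt hx.1.1) (fun h hlt => h hlt hx.1.2)
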